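/- arXiv:math/0611372 — 3 statements merged into one kernel-verified Lean document; each statement's English description precedes it below -/
import Mathlib

section
/- If ξ is e_k-optimal in Υ_v[r], then ξ has the form ξ = r·(v·λ̃) + (1−r)·Σ_{i=1}^{ℓ} p_i δ_{t_i}, where ℓ ≤ k, t_1,…,t_ℓ ∈ [−1,1] are distinct points satisfying |e_kᵀ M(ξ)⁻¹ f(t_i)| = max_{y ∈ [−1,1]} |e_kᵀ M(ξ)⁻¹ f(y)| for each i, and p_1,…,p_ℓ ∈ (0,1] with Σ_{i=1}^{ℓ} p_i = 1. (Theorem 3.1, structure part) -/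
/-!
Write `q(y) = e_kᵀ M(ξ)⁻¹ f(y)`. Since `Υ_v[r]` is convex, an optimal `ξ` can be compared with the
mixtures `(1-ε)ξ + εη` for any `η ∈ Υ_v[r]`. The derivative of `e_kᵀ M⁻¹ e_k` along this segment at
`ε = 0` is `∫ q² dξ - ∫ q² dη`, so optimality forces `∫ q² dη ≤ ∫ q² dξ`
(`integral_ekPoly_sq_le`). The derivative itself is not needed: the variational formula
`eᵀM⁻¹e = max_c (2 cᵀe - cᵀMc)` and continuity of matrix inversion suffice
(`quad_le_of_optimal`).

Decompose `ξ = r·(v·λ̃) + ν`, where `ν` has mass `1 - r`, and take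
`η = r·(v·λ̃) + (1-r)δ_{t₀}` with `t₀` a maximizer of `|q|` on `[-1,1]`. The inequality becomes
`(1-r) max q² ≤ ∫ q² dν`, so `ν` is carried by the set where `|q|` is maximal. The leading
coefficient `e_kᵀ M(ξ)⁻¹ e_k` of `q` is positive because `M(ξ)` is positive definite, so `q` has
exact degree `k - 1 ≥ 1` and this set has at most `k` points: the endpoints and the zeros of `q'`
(`exists_finset_argmax`). Hence `ν` is a finite sum of point masses (`exists_atomic_form`).
-/

set_option autoImplicit false

open MeasureTheory Set ENNReal

/-- The uniform (normalized Lebesgue) distribution on `[-1, 1]`. -/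
noncomputable def unif : Measure ℝ := (2 : ℝ≥0∞)⁻¹ • volume.restrict (Icc (-1) 1)

/-- Membership in the class `Ξ` of designs on `[-1,1]`: probability measures that are a finite
sum of point masses (in `[-1,1]`) plus a part absolutely continuous with respect to Lebesgue
measure with a density of bounded variation. -/
def MemXi (ξ : Measure ℝ) : Prop :=
  IsProbabilityMeasure ξ ∧
  ∃ (s : Finset ℝ) (w : ℝ → ℝ≥0∞) (d : ℝ → ℝ),
    (↑s : Set ℝ) ⊆ Icc (-1) 1 ∧
    BoundedVariationOn d (Icc (-1) 1) ∧ (∀ x, 0 ≤ d x) ∧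
    ξ = (∑ t ∈ s, w t • Measure.dirac t)
        + (volume.restrict (Icc (-1) 1)).withDensity (fun x => ENNReal.ofReal (d x))

/-- The measure `v·λ̃` with density `v` with respect to the uniform distribution on `[-1,1]`. -/
noncomputable def vMeas (v : ℝ → ℝ) : Measure ℝ :=
  unif.withDensity fun x => ENNReal.ofReal (v x)

/-- Membership in `Υ_v[r] = {ξ ∈ Ξ : r·(v·λ̃) ≤ ξ}`. -/
def MemUps (v : ℝ → ℝ) (r : ℝ) (ξ : Measure ℝ) : Prop :=
  MemXi ξ ∧ ENNReal.ofReal r • vMeas v ≤ ξ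

/-- The moment (information) matrix `M(ξ) = ∫ f fᵀ dξ` for polynomial regression
`f(x) = (1, x, …, x^{k-1})ᵀ`. -/
noncomputable def designMatrix (k : ℕ) (ξ : Measure ℝ) : Matrix (Fin k) (Fin k) ℝ :=
  Matrix.of fun i j => ∫ x, x ^ ((i : ℕ) + (j : ℕ)) ∂ξ

/-- The index `k-1` (corresponding to `e_k`) in `Fin k`. -/
def lastIdx (k : ℕ) (hk : 0 < k) : Fin k := ⟨k - 1, Nat.sub_lt hk one_pos⟩

/-- `ξ` is `e_k`-optimal in `Υ_v[r]`: `M(ξ)` is invertible and `e_kᵀ M(ξ)⁻¹ e_k` is minimal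
among all `η ∈ Υ_v[r]` with invertible moment matrix. -/
def EkOptimal (k : ℕ) (hk : 0 < k) (v : ℝ → ℝ) (r : ℝ) (ξ : Measure ℝ) : Prop :=
  MemUps v r ξ ∧ (designMatrix k ξ).det ≠ 0 ∧
  ∀ η : Measure ℝ, MemUps v r η → (designMatrix k η).det ≠ 0 →
    (designMatrix k ξ)⁻¹ (lastIdx k hk) (lastIdx k hk)
      ≤ (designMatrix k η)⁻¹ (lastIdx k hk) (lastIdx k hk)

/-- The polynomial `y ↦ e_kᵀ M(ξ)⁻¹ f(y)` with `f(y) = (1, y, …, y^{k-1})ᵀ`. -/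
noncomputable def ekPoly (k : ℕ) (hk : 0 < k) (ξ : Measure ℝ) (y : ℝ) : ℝ :=
  ((designMatrix k ξ)⁻¹.mulVec fun i : Fin k => y ^ (i : ℕ)) (lastIdx k hk)

/-! ### The design class is stable under mixtures -/

lemma boundedVariationOn_add {f g : ℝ → ℝ} {s : Set ℝ} (hf : BoundedVariationOn f s)
    (hg : BoundedVariationOn g s) : BoundedVariationOn (fun x => f x + g x) s := by
  refine ne_top_of_le_ne_top (ENNReal.add_ne_top.2 ⟨hf, hg⟩) (iSup_le ?_)
  rintro ⟨n, ⟨u, hu, us⟩⟩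
  calc ∑ i ∈ Finset.range n, edist (f (u (i + 1)) + g (u (i + 1))) (f (u i) + g (u i))
      ≤ ∑ i ∈ Finset.range n,
          (edist (f (u (i + 1))) (f (u i)) + edist (g (u (i + 1))) (g (u i))) :=
        Finset.sum_le_sum fun i _ => edist_add_add_le _ _ _ _
    _ ≤ eVariationOn f s + eVariationOn g s := by
        rw [Finset.sum_add_distrib]
        exact add_le_add (eVariationOn.sum_le hu us) (eVariationOn.sum_le hu us)

lemma boundedVariationOn_const_mul {f : ℝ → ℝ} {s : Set ℝ} (c : ℝ)
    (hf : BoundedVariationOn f s) : BoundedVariationOn (fun x => c * f x) s :=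
  ((lipschitzWith_smul c).lipschitzOnWith (s := univ)).comp_boundedVariationOn
    (mapsTo_univ _ _) hf

lemma aemeasurable_of_boundedVariationOn {f : ℝ → ℝ} (hf : BoundedVariationOn f (Icc (-1) 1)) :
    AEMeasurable f (volume.restrict (Icc (-1) 1)) := by
  obtain ⟨p, q, hp, hq, rfl⟩ :=
    hf.locallyBoundedVariationOn.exists_monotoneOn_sub_monotoneOn
  exact (aemeasurable_restrict_of_monotoneOn measurableSet_Icc hp).sub
    (aemeasurable_restrict_of_monotoneOn measurableSet_Icc hq)

/-- The shape shared by all designs in `Ξ`, without the normalization to total mass one: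
finitely many point masses in `[-1,1]` plus a density of bounded variation. -/
def XiForm (μ : Measure ℝ) : Prop :=
  ∃ (s : Finset ℝ) (w : ℝ → ℝ≥0∞) (d : ℝ → ℝ),
    (↑s : Set ℝ) ⊆ Icc (-1) 1 ∧
    BoundedVariationOn d (Icc (-1) 1) ∧ (∀ x, 0 ≤ d x) ∧
    μ = (∑ t ∈ s, w t • Measure.dirac t)
        + (volume.restrict (Icc (-1) 1)).withDensity (fun x => ENNReal.ofReal (d x))

/-- Additivity of `withDensity` when the first density is only a.e. measurable: a function of
bounded variation on `[-1,1]` is arbitrary outside that interval. -/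
lemma withDensity_add_of_aemeasurable {μ : Measure ℝ} {f g : ℝ → ℝ≥0∞} (hf : AEMeasurable f μ) :
    μ.withDensity (fun x => f x + g x) = μ.withDensity f + μ.withDensity g := by
  ext s hs
  rw [withDensity_apply _ hs, Measure.add_apply, withDensity_apply _ hs, withDensity_apply _ hs,
    lintegral_add_left' hf.restrict]

lemma XiForm.add {μ ν : Measure ℝ} (hμ : XiForm μ) (hν : XiForm ν) : XiForm (μ + ν) := by
  classical
  obtain ⟨s, w, d, hs, hd, hd0, rfl⟩ := hμ
  obtain ⟨s', w', d', hs', hd', hd0', rfl⟩ := hν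
  refine ⟨s ∪ s', fun x => (if x ∈ s then w x else 0) + (if x ∈ s' then w' x else 0),
    fun x => d x + d' x, ?_, boundedVariationOn_add hd hd',
    fun x => add_nonneg (hd0 x) (hd0' x), ?_⟩
  · rw [Finset.coe_union]; exact union_subset hs hs'
  · simp_rw [ENNReal.ofReal_add (hd0 _) (hd0' _)]
    rw [withDensity_add_of_aemeasurable (aemeasurable_of_boundedVariationOn hd).ennreal_ofReal]
    simp_rw [add_smul, Finset.sum_add_distrib, ite_smul, zero_smul]
    rw [Finset.sum_ite_mem, Finset.sum_ite_mem, Finset.union_inter_cancel_left,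
      Finset.union_inter_cancel_right]
    abel

lemma XiForm.smul {μ : Measure ℝ} (hμ : XiForm μ) {c : ℝ≥0∞} (hc : c ≠ ⊤) : XiForm (c • μ) := by
  obtain ⟨s, w, d, hs, hd, hd0, rfl⟩ := hμ
  refine ⟨s, fun x => c * w x, fun x => c.toReal * d x, hs,
    boundedVariationOn_const_mul _ hd, fun x => mul_nonneg ENNReal.toReal_nonneg (hd0 x), ?_⟩
  simp_rw [ENNReal.ofReal_mul ENNReal.toReal_nonneg, ENNReal.ofReal_toReal hc, mul_smul]
  rw [smul_add, Finset.smul_sum, ← withDensity_smul' _ _ hc]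
  rfl

lemma xiForm_dirac {t : ℝ} (ht : t ∈ Icc (-1 : ℝ) 1) : XiForm (Measure.dirac t) := by
  refine ⟨{t}, fun _ => 1, fun _ => 0, by simpa using ht, ?_, fun _ => le_rfl, by simp⟩
  rw [BoundedVariationOn, eVariationOn.constant_on]
  · simp
  · rintro _ ⟨x, -, rfl⟩ _ ⟨y, -, rfl⟩
    rfl

lemma xiForm_vMeas {v : ℝ → ℝ} (hv0 : ∀ x, 0 ≤ v x) (hv : BoundedVariationOn v (Icc (-1) 1)) :
    XiForm (vMeas v) := by
  rw [vMeas, unif, withDensity_smul_measure]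
  exact XiForm.smul ⟨∅, 0, v, by simp, hv, hv0, by simp⟩ (by simp)

lemma XiForm.compl_Icc {μ : Measure ℝ} (hμ : XiForm μ) : μ (Icc (-1) 1)ᶜ = 0 := by
  obtain ⟨s, w, d, hs, hd, hd0, rfl⟩ := hμ
  rw [Measure.add_apply, Measure.finsetSum_apply]
  refine add_eq_zero.2 ⟨Finset.sum_eq_zero fun t ht => ?_, ?_⟩
  · have : t ∉ (Icc (-1 : ℝ) 1)ᶜ := fun h => h (hs ht)
    rw [Measure.smul_apply, Measure.dirac_apply' _ measurableSet_Icc.compl,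
      indicator_of_notMem this, smul_zero]
  · refine withDensity_absolutelyContinuous _ _ ?_
    rw [Measure.restrict_apply measurableSet_Icc.compl, compl_inter_self, measure_empty]

lemma vMeas_univ {v : ℝ → ℝ} (hv0 : ∀ x, 0 ≤ v x) (hv1 : ∫ x, v x ∂unif = 1) :
    vMeas v univ = 1 := by
  have hi : Integrable v unif := by
    by_contra h
    rw [integral_undef h] at hv1
    exact zero_ne_one hv1
  rw [vMeas, withDensity_apply _ MeasurableSet.univ, Measure.restrict_univ,
    ← ofReal_integral_eq_lintegral_ofReal hi (Filter.Eventually.of_forall hv0), hv1,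
    ENNReal.ofReal_one]

/-! ### Moment matrices -/

lemma integrable_of_continuous {μ : Measure ℝ} [IsFiniteMeasure μ] (hμ : μ (Icc (-1) 1)ᶜ = 0)
    {f : ℝ → ℝ} (hf : Continuous f) : Integrable f μ := by
  have h : μ.restrict (Icc (-1) 1) = μ :=
    Measure.restrict_eq_self_of_ae_mem (mem_ae_iff.2 hμ)
  have := (hf.continuousOn (s := Icc (-1) 1)).integrableOn_compact (μ := μ) isCompact_Icc
  rwa [IntegrableOn, h] at this

open Matrix in
/-- The quadratic form of the moment matrix is the second moment of the associated polynomial: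
`cᵀ M(μ) c = ∫ (∑ cᵢ xⁱ)² dμ`. -/
lemma dotProduct_designMatrix_mulVec {k : ℕ} {μ : Measure ℝ} [IsFiniteMeasure μ]
    (hμ : μ (Icc (-1) 1)ᶜ = 0) (c : Fin k → ℝ) :
    c ⬝ᵥ (designMatrix k μ *ᵥ c) = ∫ x, (∑ i, c i * x ^ (i : ℕ)) ^ 2 ∂μ := by
  have h1 : ∀ x : ℝ, (∑ i, c i * x ^ (i : ℕ)) ^ 2
      = ∑ i, ∑ j, c i * c j * x ^ ((i : ℕ) + (j : ℕ)) := fun x => by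
    rw [sq, Finset.sum_mul_sum]
    refine Finset.sum_congr rfl fun i _ => Finset.sum_congr rfl fun j _ => by ring
  simp_rw [h1]
  rw [integral_finsetSum _ fun i _ => integrable_of_continuous hμ (by fun_prop)]
  simp_rw [dotProduct, mulVec, dotProduct, Finset.mul_sum]
  refine Finset.sum_congr rfl fun i _ => ?_
  rw [integral_finsetSum _ fun i _ => integrable_of_continuous hμ (by fun_prop)]
  refine Finset.sum_congr rfl fun j _ => ?_
  rw [integral_const_mul, designMatrix, Matrix.of_apply]
  ring

lemma designMatrix_isSymm (k : ℕ) (μ : Measure ℝ) : (designMatrix k μ).transpose = designMatrix k μ := by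
  ext i j
  simp [designMatrix, add_comm]

/-- The moment matrix is always positive semidefinite, hence positive definite once invertible. -/
lemma designMatrix_posDef {k : ℕ} {μ : Measure ℝ} [IsFiniteMeasure μ]
    (hμ : μ (Icc (-1) 1)ᶜ = 0) (hdet : (designMatrix k μ).det ≠ 0) : (designMatrix k μ).PosDef := by
  have h : (designMatrix k μ).PosSemidef := by
    refine Matrix.PosSemidef.of_dotProduct_mulVec_nonneg ?_ fun c => ?_
    · rw [Matrix.IsHermitian, Matrix.conjTranspose_eq_transpose_of_trivial, designMatrix_isSymm]
    · rw [star_trivial, dotProduct_designMatrix_mulVec hμ]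
      exact integral_nonneg fun x => sq_nonneg _
  exact h.posDef_iff_isUnit.2 ((Matrix.isUnit_iff_isUnit_det _).2 (isUnit_iff_ne_zero.2 hdet))

lemma designMatrix_mix {k : ℕ} {μ ν : Measure ℝ} [IsFiniteMeasure μ] [IsFiniteMeasure ν]
    (hμ : μ (Icc (-1) 1)ᶜ = 0) (hν : ν (Icc (-1) 1)ᶜ = 0) {a b : ℝ} (ha : 0 ≤ a) (hb : 0 ≤ b) :
    designMatrix k (ENNReal.ofReal a • μ + ENNReal.ofReal b • ν)
      = a • designMatrix k μ + b • designMatrix k ν := by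
  ext i j
  have h1 := integrable_of_continuous hμ (continuous_pow ((i : ℕ) + (j : ℕ)))
  have h2 := integrable_of_continuous hν (continuous_pow ((i : ℕ) + (j : ℕ)))
  simp only [designMatrix, Matrix.of_apply, Matrix.add_apply, Matrix.smul_apply]
  rw [integral_add_measure (h1.smul_measure (by simp)) (h2.smul_measure (by simp)),
    integral_smul_measure, integral_smul_measure, ENNReal.toReal_ofReal ha,
    ENNReal.toReal_ofReal hb]

/-! ### The first-order optimality condition -/

open Matrix in
/-- Half of the variational formula `eᵀM⁻¹e = max_c (2 cᵀe - cᵀMc)`, obtained by completing the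
square around the maximizer `M⁻¹e`. -/
lemma two_mul_sub_le {k : ℕ} {M : Matrix (Fin k) (Fin k) ℝ} (hM : M.PosDef) (e c : Fin k → ℝ) :
    2 * (c ⬝ᵥ e) - c ⬝ᵥ (M *ᵥ c) ≤ e ⬝ᵥ (M⁻¹ *ᵥ e) := by
  have hu : IsUnit M.det := (Matrix.isUnit_iff_isUnit_det _).1 hM.isUnit
  have hT : Mᵀ = M := by
    have := hM.isHermitian
    rwa [Matrix.IsHermitian, Matrix.conjTranspose_eq_transpose_of_trivial] at this
  set d := M⁻¹ *ᵥ e with hd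
  have hMd : M *ᵥ d = e := by rw [hd, mulVec_mulVec, mul_nonsing_inv _ hu, one_mulVec]
  have hdc : d ⬝ᵥ (M *ᵥ c) = c ⬝ᵥ e := by
    rw [dotProduct_mulVec, ← mulVec_transpose, hT, hMd, dotProduct_comm]
  have h := hM.posSemidef.dotProduct_mulVec_nonneg (c - d)
  rw [star_trivial, mulVec_sub, dotProduct_sub, sub_dotProduct, sub_dotProduct, hMd, hdc] at h
  rw [dotProduct_comm e d]
  linarith

open Matrix in
/-- First-order condition: if `ε ↦ eⱼᵀ((1-ε)M + εN)⁻¹eⱼ` is smallest at `ε = 0`, then `cᵀNc ≤ cᵀMc`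
for `c = M⁻¹eⱼ`. Writing `A ε` for the mixture and `c_ε = (A ε)⁻¹eⱼ`, the variational formula for
`M` tested at `c_ε` gives `eⱼᵀ(A ε)⁻¹eⱼ ≤ eⱼᵀM⁻¹eⱼ - ε c_εᵀ(N-M)c_ε`, so that
`c_εᵀNc_ε ≤ c_εᵀMc_ε` for small `ε > 0`; then let `ε → 0`. -/
lemma quad_le_of_optimal {k : ℕ} {M N : Matrix (Fin k) (Fin k) ℝ} (hM : M.PosDef) (j : Fin k)
    (hopt : ∀ ε : ℝ, 0 < ε → ε < 1 → ((1 - ε) • M + ε • N).det ≠ 0 →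
      M⁻¹ j j ≤ ((1 - ε) • M + ε • N)⁻¹ j j) :
    (M⁻¹ *ᵥ Pi.single j 1) ⬝ᵥ (N *ᵥ (M⁻¹ *ᵥ Pi.single j 1))
      ≤ (M⁻¹ *ᵥ Pi.single j 1) ⬝ᵥ (M *ᵥ (M⁻¹ *ᵥ Pi.single j 1)) := by
  set e : Fin k → ℝ := Pi.single j 1 with he
  set A : ℝ → Matrix (Fin k) (Fin k) ℝ := fun ε => (1 - ε) • M + ε • N with hA
  have hA0 : A 0 = M := by simp [hA]
  have hAc : Continuous A := by fun_prop
  have hdet0 : (A 0).det ≠ 0 := by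
    rw [hA0]; exact ((Matrix.isUnit_iff_isUnit_det _).1 hM.isUnit).ne_zero
  have hdc : Continuous fun ε => (A ε).det := hAc.matrix_det
  have hinv : ContinuousAt (fun ε => (A ε)⁻¹) 0 := by
    simp_rw [Matrix.inv_def, Ring.inverse_eq_inv']
    exact (hdc.continuousAt.inv₀ hdet0).smul hAc.matrix_adjugate.continuousAt
  have hquad : ∀ (B : Matrix (Fin k) (Fin k) ℝ), ContinuousAt
      (fun ε => ((A ε)⁻¹ *ᵥ e) ⬝ᵥ (B *ᵥ ((A ε)⁻¹ *ᵥ e))) 0 := fun B => by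
    have : Continuous fun X : Matrix (Fin k) (Fin k) ℝ => (X *ᵥ e) ⬝ᵥ (B *ᵥ (X *ᵥ e)) := by
      fun_prop
    exact this.continuousAt.comp hinv
  have key : ∀ᶠ ε in nhdsWithin (0 : ℝ) (Ioi 0),
      ((A ε)⁻¹ *ᵥ e) ⬝ᵥ (N *ᵥ ((A ε)⁻¹ *ᵥ e)) ≤ ((A ε)⁻¹ *ᵥ e) ⬝ᵥ (M *ᵥ ((A ε)⁻¹ *ᵥ e)) := by
    have hd : ∀ᶠ ε in nhdsWithin (0 : ℝ) (Ioi 0), (A ε).det ≠ 0 :=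
      (hdc.continuousAt.eventually_ne hdet0).filter_mono nhdsWithin_le_nhds
    have h1 : ∀ᶠ ε in nhdsWithin (0 : ℝ) (Ioi 0), ε < 1 :=
      (eventually_lt_nhds one_pos).filter_mono nhdsWithin_le_nhds
    filter_upwards [hd, h1, self_mem_nhdsWithin] with ε hε hε1 hε0
    rw [mem_Ioi] at hε0
    have ho := hopt ε hε0 hε1 hε
    set c := (A ε)⁻¹ *ᵥ e with hc
    have hAc : A ε *ᵥ c = e := by
      rw [hc, mulVec_mulVec, mul_nonsing_inv _ (isUnit_iff_ne_zero.2 hε), one_mulVec]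
    have hce : c ⬝ᵥ e = ((1 - ε) • M + ε • N)⁻¹ j j := by
      simp [hc, he, hA]
    have hMe : e ⬝ᵥ (M⁻¹ *ᵥ e) = M⁻¹ j j := by simp [he]
    have hexp : c ⬝ᵥ e = (1 - ε) * (c ⬝ᵥ (M *ᵥ c)) + ε * (c ⬝ᵥ (N *ᵥ c)) := by
      conv_lhs => rw [← hAc]
      simp only [hA, add_mulVec, smul_mulVec, dotProduct_add, dotProduct_smul, smul_eq_mul]
    have hv := two_mul_sub_le hM e c
    nlinarith
  have hN := (hquad N).tendsto.mono_left (nhdsWithin_le_nhds (s := Ioi 0))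
  have hM' := (hquad M).tendsto.mono_left (nhdsWithin_le_nhds (s := Ioi 0))
  have := le_of_tendsto_of_tendsto hN hM' key
  rwa [hA0] at this

/-! ### Maximizers of a polynomial and atomic measures -/

/-- A polynomial of exact degree `k - 1 ≥ 1` has at most `k` points of maximal modulus on `[-1,1]`:
the two endpoints and the at most `k - 2` zeros of its derivative. -/
lemma exists_finset_argmax {k : ℕ} (hk : 2 ≤ k) (P : Polynomial ℝ) (hdeg : P.natDegree ≤ k - 1)
    (hlead : P.coeff (k - 1) ≠ 0) :
    ∃ F : Finset ℝ, F.card ≤ k ∧ ∀ t, t ∈ F ↔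
      t ∈ Icc (-1 : ℝ) 1 ∧ ∀ y ∈ Icc (-1 : ℝ) 1, |P.eval y| ≤ |P.eval t| := by
  classical
  have hD : P.derivative ≠ 0 := by
    intro h
    have h1 := congrArg (fun Q => Q.coeff (k - 2)) h
    simp only [Polynomial.coeff_derivative, Polynomial.coeff_zero] at h1
    rw [show k - 2 + 1 = k - 1 by omega] at h1
    exact hlead ((mul_eq_zero.1 h1).resolve_right (by positivity))
  let G : Finset ℝ := {-1, 1} ∪ P.derivative.roots.toFinset
  have hG : G.card ≤ k := by
    have h1 : P.derivative.roots.toFinset.card ≤ k - 2 :=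
      (Multiset.toFinset_card_le _).trans ((Polynomial.card_roots' _).trans
        ((Polynomial.natDegree_derivative_le P).trans (by omega)))
    have h2 : ({-1, 1} : Finset ℝ).card ≤ 2 := Finset.card_le_two
    exact (Finset.card_union_le _ _).trans (by omega)
  refine ⟨G.filter fun t => t ∈ Icc (-1 : ℝ) 1 ∧
    ∀ y ∈ Icc (-1 : ℝ) 1, |P.eval y| ≤ |P.eval t|, (Finset.card_filter_le _ _).trans hG,
    fun t => ?_⟩
  rw [Finset.mem_filter, and_iff_right_iff_imp]
  rintro ⟨ht, hmax⟩
  rw [Finset.mem_union, Multiset.mem_toFinset, Polynomial.mem_roots hD, Finset.mem_insert,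
    Finset.mem_singleton]
  -- A maximizer of `|P|` in the open interval is a local maximum or minimum of `P`, according to
  -- the sign of `P t`, hence a zero of `P'`; no separate treatment of `P t = 0` is needed.
  by_contra! hcon
  obtain ⟨⟨h1, h2⟩, h3⟩ := hcon
  have hnhds : Icc (-1 : ℝ) 1 ∈ nhds t :=
    Icc_mem_nhds (lt_of_le_of_ne ht.1 (Ne.symm h1)) (lt_of_le_of_ne ht.2 h2)
  have hext : IsLocalExtr (fun x => P.eval x) t := by
    rcases le_total 0 (P.eval t) with h0 | h0
    · right
      filter_upwards [hnhds] with y hy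
      exact (le_abs_self _).trans ((hmax y hy).trans_eq (abs_of_nonneg h0))
    · left
      filter_upwards [hnhds] with y hy
      have := (neg_le_abs _).trans ((hmax y hy).trans_eq (abs_of_nonpos h0))
      exact neg_le_neg_iff.1 this
  have := hext.deriv_eq_zero
  rw [Polynomial.deriv] at this
  exact h3 this

/-- A measure of mass `s > 0` carried by a finite set is `s` times a convex combination of Dirac
masses at distinct points of that set, with strictly positive weights. -/
lemma exists_atomic_form {ν : Measure ℝ} {F : Finset ℝ} (hF : ν (↑F : Set ℝ)ᶜ = 0) {s : ℝ}
    (hs : 0 < s) (hν : ν univ = ENNReal.ofReal s) :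
    ∃ (ℓ : ℕ) (_ : ℓ ≤ F.card) (t : Fin ℓ → ℝ) (p : Fin ℓ → ℝ),
      Function.Injective t ∧ (∀ i, t i ∈ F) ∧ (∀ i, p i ∈ Ioc (0 : ℝ) 1) ∧ (∑ i, p i = 1) ∧
      ν = ∑ i : Fin ℓ, ENNReal.ofReal (s * p i) • Measure.dirac (t i) := by
  classical
  have hfin : ∀ x, ν {x} ≠ ⊤ := fun x =>
    ne_top_of_le_ne_top (by rw [hν]; exact ENNReal.ofReal_ne_top) (measure_mono (subset_univ {x}))
  let F' := F.filter fun x => ν {x} ≠ 0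
  have hsum : ν = ∑ x ∈ F', ν {x} • Measure.dirac x := by
    ext B hB
    -- As `ν` is carried by `F`, the mass of `B` is that of the finite set `F ∩ B`.
    have h1 : ν B = ∑ x ∈ F.filter (· ∈ B), ν {x} := by
      rw [sum_measure_singleton, Finset.coe_filter]
      refine le_antisymm ?_ (measure_mono fun x hx => hx.2)
      calc ν B ≤ ν ({x | x ∈ F ∧ x ∈ B} ∪ (↑F : Set ℝ)ᶜ) := measure_mono fun x hx => by
            by_cases h : x ∈ F
            · exact Or.inl ⟨h, hx⟩
            · exact Or.inr h
        _ ≤ _ := (measure_union_le _ _).trans (by rw [hF, add_zero])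
    rw [h1, Measure.finsetSum_apply, Finset.sum_filter, Finset.sum_filter]
    refine Finset.sum_congr rfl fun x _ => ?_
    rw [Measure.smul_apply, Measure.dirac_apply' _ hB]
    by_cases hx : ν {x} = 0 <;> by_cases hxB : x ∈ B <;> simp [hx, hxB]
  let φ := F'.equivFin.symm
  let p : Fin F'.card → ℝ := fun i => (ν {(φ i : ℝ)}).toReal / s
  have hsp : ∀ i, ENNReal.ofReal (s * p i) = ν {(φ i : ℝ)} := fun i => by
    rw [mul_div_cancel₀ _ hs.ne', ENNReal.ofReal_toReal (hfin _)]
  have hform : ν = ∑ i, ENNReal.ofReal (s * p i) • Measure.dirac (φ i : ℝ) := by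
    simp_rw [hsp]
    rw [Equiv.sum_comp φ (fun x : F' => ν {(x : ℝ)} • Measure.dirac (x : ℝ)),
      Finset.sum_coe_sort F' (fun x => ν {x} • Measure.dirac x)]
    exact hsum
  have hp0 : ∀ i, 0 < p i := fun i =>
    div_pos (ENNReal.toReal_pos (Finset.mem_filter.1 (φ i).2).2 (hfin _)) hs
  have hp1 : ∑ i, p i = 1 := by
    have h := congrArg (fun m : Measure ℝ => m univ) hform
    simp only [Measure.finsetSum_apply, Measure.smul_apply, measure_univ, smul_eq_mul, mul_one,
      hν] at h
    rw [← ENNReal.ofReal_sum_of_nonneg fun i _ => mul_nonneg hs.le (hp0 i).le,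
      ENNReal.ofReal_eq_ofReal_iff hs.le (Finset.sum_nonneg fun i _ => mul_nonneg hs.le (hp0 i).le),
      ← Finset.mul_sum] at h
    exact mul_left_cancel₀ hs.ne' (by linarith)
  refine ⟨F'.card, Finset.card_filter_le _ _, fun i => φ i, p,
    Subtype.val_injective.comp φ.injective, fun i => (Finset.mem_filter.1 (φ i).2).1,
    fun i => ⟨hp0 i, ?_⟩, hp1, hform⟩
  rw [← hp1]
  exact Finset.single_le_sum (fun j _ => (hp0 j).le) (Finset.mem_univ i)

/-! ### Application to `e_k`-optimal designs -/

lemma ekPoly_eq_sum {k : ℕ} (hk : 0 < k) (ξ : Measure ℝ) (y : ℝ) :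
    ekPoly k hk ξ y = ∑ i, (designMatrix k ξ)⁻¹ (lastIdx k hk) i * y ^ (i : ℕ) := rfl

/-- `M(ξ)⁻¹` is symmetric, so the column `M(ξ)⁻¹eⱼ` has the entries of its `j`-th row; for
`j = k - 1` these are the coefficients of `ekPoly`. -/
lemma inv_mulVec_single {k : ℕ} (ξ : Measure ℝ) (i j : Fin k) :
    ((designMatrix k ξ)⁻¹.mulVec (Pi.single j 1)) i = (designMatrix k ξ)⁻¹ j i := by
  have h : (designMatrix k ξ)⁻¹.transpose = (designMatrix k ξ)⁻¹ := by
    rw [Matrix.transpose_nonsing_inv, designMatrix_isSymm]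
  rw [Matrix.mulVec_single_one]
  exact congrFun (congrFun h j) i

lemma exists_polynomial_ekPoly {k : ℕ} (hk : 0 < k) (ξ : Measure ℝ) :
    ∃ P : Polynomial ℝ, P.natDegree ≤ k - 1 ∧
      P.coeff (k - 1) = (designMatrix k ξ)⁻¹ (lastIdx k hk) (lastIdx k hk) ∧
      ∀ y, P.eval y = ekPoly k hk ξ y := by
  refine ⟨∑ i : Fin k, Polynomial.C ((designMatrix k ξ)⁻¹ (lastIdx k hk) i) *
    Polynomial.X ^ (i : ℕ), ?_, ?_, fun y => ?_⟩
  · refine Polynomial.natDegree_sum_le_of_forall_le _ _ fun i _ => ?_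
    exact (Polynomial.natDegree_C_mul_X_pow_le _ _).trans (by omega)
  · rw [Polynomial.finsetSum_coeff, Finset.sum_eq_single (lastIdx k hk)]
    · simp [lastIdx]
    · intro i _ hi
      rw [Polynomial.coeff_C_mul_X_pow, if_neg]
      intro h
      exact hi (Fin.ext h.symm)
    · simp
  · rw [Polynomial.eval_finsetSum, ekPoly_eq_sum]
    simp

lemma continuous_ekPoly {k : ℕ} (hk : 0 < k) (ξ : Measure ℝ) : Continuous (ekPoly k hk ξ) := by
  simp_rw [funext (ekPoly_eq_sum hk ξ)]
  fun_prop

lemma memUps_add_dirac {v : ℝ → ℝ} (hv0 : ∀ x, 0 ≤ v x)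
    (hvBV : BoundedVariationOn v (Icc (-1) 1)) (hv1 : ∫ x, v x ∂unif = 1) {r : ℝ}
    (hr : r ∈ Icc (0 : ℝ) 1) {t : ℝ} (ht : t ∈ Icc (-1 : ℝ) 1) :
    MemUps v r (ENNReal.ofReal r • vMeas v + ENNReal.ofReal (1 - r) • Measure.dirac t) := by
  refine ⟨⟨⟨?_⟩, ((xiForm_vMeas hv0 hvBV).smul ENNReal.ofReal_ne_top).add
    ((xiForm_dirac ht).smul ENNReal.ofReal_ne_top)⟩, Measure.le_add_right le_rfl⟩
  rw [Measure.add_apply, Measure.smul_apply, Measure.smul_apply, vMeas_univ hv0 hv1, measure_univ,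
    smul_eq_mul, smul_eq_mul, mul_one, mul_one,
    ← ENNReal.ofReal_add hr.1 (sub_nonneg.2 hr.2), add_sub_cancel, ENNReal.ofReal_one]

lemma MemUps.mix {v : ℝ → ℝ} {r : ℝ} {ξ η : Measure ℝ} (hξ : MemUps v r ξ) (hη : MemUps v r η)
    {ε : ℝ} (h0 : 0 ≤ ε) (h1 : ε ≤ 1) :
    MemUps v r (ENNReal.ofReal (1 - ε) • ξ + ENNReal.ofReal ε • η) := by
  have hsum : ENNReal.ofReal (1 - ε) + ENNReal.ofReal ε = 1 := by
    rw [← ENNReal.ofReal_add (sub_nonneg.2 h1) h0, sub_add_cancel, ENNReal.ofReal_one]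
  obtain ⟨⟨hpξ, hfξ⟩, hlξ⟩ := hξ
  obtain ⟨⟨hpη, hfη⟩, hlη⟩ := hη
  refine ⟨⟨⟨?_⟩, (XiForm.smul hfξ ENNReal.ofReal_ne_top).add
    (XiForm.smul hfη ENNReal.ofReal_ne_top)⟩, fun B => ?_⟩
  · simp [hsum]
  · calc (ENNReal.ofReal r • vMeas v) B
        = ENNReal.ofReal (1 - ε) * (ENNReal.ofReal r • vMeas v) B
          + ENNReal.ofReal ε * (ENNReal.ofReal r • vMeas v) B := by
            rw [← add_mul, hsum, one_mul]
      _ ≤ ENNReal.ofReal (1 - ε) * ξ B + ENNReal.ofReal ε * η B := by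
            gcongr

/-- The optimality condition for designs: with `q = ekPoly k hk ξ`, no competitor `η` has a larger
value of `∫ q² dη` than the optimal design `ξ`. -/
lemma integral_ekPoly_sq_le {k : ℕ} (hk : 0 < k) {v : ℝ → ℝ} {r : ℝ} {ξ : Measure ℝ}
    (hopt : EkOptimal k hk v r ξ) {η : Measure ℝ} (hη : MemUps v r η) :
    ∫ x, ekPoly k hk ξ x ^ 2 ∂η ≤ ∫ x, ekPoly k hk ξ x ^ 2 ∂ξ := by
  obtain ⟨hξ, hdet, hmin⟩ := hopt
  have := hξ.1.1
  have := hη.1.1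
  have hcξ : ξ (Icc (-1) 1)ᶜ = 0 := XiForm.compl_Icc hξ.1.2
  have hcη : η (Icc (-1) 1)ᶜ = 0 := XiForm.compl_Icc hη.1.2
  have h := quad_le_of_optimal (N := designMatrix k η) (designMatrix_posDef hcξ hdet)
    (lastIdx k hk) fun ε h0 h1 hd => by
      rw [← designMatrix_mix hcξ hcη (sub_nonneg.2 h1.le) h0.le] at hd ⊢
      exact hmin _ (hξ.mix hη h0.le h1.le) hd
  rw [dotProduct_designMatrix_mulVec hcξ, dotProduct_designMatrix_mulVec hcη] at h
  simp_rw [inv_mulVec_single] at h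
  exact h

/-- **Theorem 3.1 (structure part)**: an `e_k`-optimal design in `Υ_v[r]` has the form
`r·(v·λ̃) + (1-r)·Σ p_i δ_{t_i}` with `ℓ ≤ k` distinct points `t_i ∈ [-1,1]` at which
`|e_kᵀ M(ξ)⁻¹ f(·)|` attains its maximum over `[-1,1]`, and weights `p_i ∈ (0,1]` summing
to `1`. -/
theorem ekOptimal_structure (k : ℕ) (hk : 2 ≤ k)
    (v : ℝ → ℝ) (hv0 : ∀ x, 0 ≤ v x) (hvBV : BoundedVariationOn v (Icc (-1) 1))
    (hv1 : ∫ x, v x ∂unif = 1)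
    (r : ℝ) (hr : r ∈ Icc (0 : ℝ) 1)
    (ξ : Measure ℝ) (hopt : EkOptimal k (by omega) v r ξ) :
    ∃ (ℓ : ℕ) (_ : ℓ ≤ k) (t : Fin ℓ → ℝ) (p : Fin ℓ → ℝ),
      Function.Injective t ∧ (∀ i, t i ∈ Icc (-1 : ℝ) 1) ∧
      (∀ i, p i ∈ Ioc (0 : ℝ) 1) ∧ (∑ i, p i = 1) ∧
      (∀ i, ∀ y ∈ Icc (-1 : ℝ) 1,
        |ekPoly k (by omega) ξ y| ≤ |ekPoly k (by omega) ξ (t i)|) ∧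
      ξ = ENNReal.ofReal r • vMeas v
            + ∑ i : Fin ℓ, ENNReal.ofReal ((1 - r) * p i) • Measure.dirac (t i) := by
  have hk0 : 0 < k := by omega
  have hξ := hopt.1
  have := hξ.1.1
  have hcξ : ξ (Icc (-1) 1)ᶜ = 0 := XiForm.compl_Icc hξ.1.2
  have hvp : IsProbabilityMeasure (vMeas v) := ⟨vMeas_univ hv0 hv1⟩
  obtain ⟨P, hPdeg, hPlead, hPeval⟩ := exists_polynomial_ekPoly hk0 ξ
  obtain ⟨F, hFcard, hF⟩ := exists_finset_argmax hk P hPdeg (by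
    rw [hPlead]; exact ((designMatrix_posDef hcξ hopt.2.1).inv.diag_pos).ne')
  simp_rw [hPeval] at hF
  have hqc := continuous_ekPoly hk0 ξ
  obtain ⟨t₀, ht₀, hmax⟩ := isCompact_Icc.exists_isMaxOn
    (⟨0, by norm_num, by norm_num⟩ : (Icc (-1 : ℝ) 1).Nonempty) hqc.abs.continuousOn
  have hmax' : ∀ y ∈ Icc (-1 : ℝ) 1, |ekPoly k hk0 ξ y| ≤ |ekPoly k hk0 ξ t₀| := fun y hy =>
    hmax hy
  set μ₀ := ENNReal.ofReal r • vMeas v with hμ₀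
  have hμ₀fin : IsFiniteMeasure μ₀ := (vMeas v).smul_finite ENNReal.ofReal_ne_top
  obtain ⟨ν, hν⟩ : ∃ ν, ξ = μ₀ + ν := ⟨ξ - μ₀, by
    rw [add_comm, Measure.sub_add_cancel_of_le hξ.2]⟩
  have hνle : ν ≤ ξ := by rw [hν]; exact Measure.le_add_left le_rfl
  have hνfin : IsFiniteMeasure ν := isFiniteMeasure_of_le ξ hνle
  have hμ₀univ : μ₀ univ = ENNReal.ofReal r := by
    rw [hμ₀, Measure.smul_apply, measure_univ, smul_eq_mul, mul_one]
  have hνuniv : ν univ = ENNReal.ofReal (1 - r) := by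
    have h : (1 : ℝ≥0∞) = ENNReal.ofReal r + ν univ := by
      rw [← measure_univ (μ := ξ), hν, Measure.add_apply, hμ₀univ]
    rw [ENNReal.ofReal_sub _ hr.1, ENNReal.ofReal_one, h,
      ENNReal.add_sub_cancel_left ENNReal.ofReal_ne_top]
  rcases hr.2.eq_or_lt with hr1 | hr1
  · -- With `r = 1` no mass is left, and any single maximizer serves as `t`.
    have hν0 : ν = 0 := by
      rw [← Measure.measure_univ_eq_zero, hνuniv, hr1, sub_self, ENNReal.ofReal_zero]
    refine ⟨1, by omega, fun _ => t₀, fun _ => 1, Function.injective_of_subsingleton _,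
      fun _ => ht₀, fun _ => by simp, by simp, fun _ => hmax', ?_⟩
    rw [hν, hν0]
    simp [hr1]
  have hcν : ν (Icc (-1) 1)ᶜ = 0 := le_antisymm ((hνle _).trans_eq hcξ) bot_le
  have hcμ₀ : μ₀ (Icc (-1) 1)ᶜ = 0 := le_antisymm ((hξ.2 _).trans_eq hcξ) bot_le
  have hq2 : Continuous fun x => ekPoly k hk0 ξ x ^ 2 := hqc.pow 2
  have hiν := integrable_of_continuous hcν hq2
  have hiμ₀ := integrable_of_continuous hcμ₀ hq2
  -- Competing against the design that puts all free mass at `t₀` gives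
  -- `(1 - r) q(t₀)² ≤ ∫ q² dν`, where `ν` has mass `1 - r` and `q² ≤ q(t₀)²` holds `ν`-a.e.
  have hle := integral_ekPoly_sq_le hk0 hopt (memUps_add_dirac hv0 hvBV hv1 hr ht₀)
  have hξint : ∫ x, ekPoly k hk0 ξ x ^ 2 ∂ξ
      = ∫ x, ekPoly k hk0 ξ x ^ 2 ∂μ₀ + ∫ x, ekPoly k hk0 ξ x ^ 2 ∂ν := by
    rw [← integral_add_measure hiμ₀ hiν, ← hν]
  rw [hξint, ← hμ₀, integral_add_measure hiμ₀
    ((integrable_dirac (by simp)).smul_measure ENNReal.ofReal_ne_top),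
    integral_smul_measure _ (ENNReal.ofReal (1 - r)), integral_dirac,
    ENNReal.toReal_ofReal (sub_nonneg.2 hr.2),
    smul_eq_mul] at hle
  have hnn : 0 ≤ᵐ[ν] fun x => ekPoly k hk0 ξ t₀ ^ 2 - ekPoly k hk0 ξ x ^ 2 := by
    filter_upwards [mem_ae_iff.2 hcν] with x hx
    exact sub_nonneg.2 (sq_le_sq.2 (hmax' x hx))
  have hint0 : ∫ x, (ekPoly k hk0 ξ t₀ ^ 2 - ekPoly k hk0 ξ x ^ 2) ∂ν = 0 := by
    refine le_antisymm ?_ (integral_nonneg_of_ae hnn)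
    rw [integral_sub (integrable_const _) hiν, integral_const, Measure.real, hνuniv,
      ENNReal.toReal_ofReal (sub_nonneg.2 hr.2), smul_eq_mul]
    linarith
  have hae := (integral_eq_zero_iff_of_nonneg_ae hnn ((integrable_const _).sub hiν)).1 hint0
  have hνF : ν (↑F : Set ℝ)ᶜ = 0 := by
    rw [← mem_ae_iff]
    filter_upwards [hae, mem_ae_iff.2 hcν] with x hx hxI
    have hsq : ekPoly k hk0 ξ t₀ ^ 2 = ekPoly k hk0 ξ x ^ 2 := sub_eq_zero.1 hx
    refine (hF x).2 ⟨hxI, fun y hy => ?_⟩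
    rw [← (sq_eq_sq_iff_abs_eq_abs _ _).1 hsq]
    exact hmax' y hy
  obtain ⟨ℓ, hℓ, t, p, hinj, htF, hp, hps, hform⟩ :=
    exists_atomic_form hνF (sub_pos.2 hr1) hνuniv
  refine ⟨ℓ, hℓ.trans hFcard, t, p, hinj, fun i => ((hF _).1 (htF i)).1, hp, hps,
    fun i => ((hF _).1 (htF i)).2, ?_⟩
  rw [← hform, ← hν]
end

section
/- For straight-line regression (k = 2) on [−1,1] with constant weight v ≡ 1 and any r ∈ [0,1], the design ξ = r·λ̃ + (1−r)·(1/2)(δ_{−1} + δ_1) is e_2-optimal in Υ[r], i.e., it minimizes e_2ᵀ M(·)⁻¹ e_2 over Υ[r]. (Example 3.4(a)) -/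
/-! The entry `(M(η)⁻¹)₂₂` of a design `η` is the reciprocal of its variance
`∫ x² dη - (∫ x dη)²`, so the claim is that the stated design has the largest variance in `Υ[r]`.
It is centred, with second moment `1 - 2r/3`. For any `η ∈ Υ[r]` the variance is at most
`∫ x² dη = 1 - ∫ (1 - x²) dη`, and since `1 - x² ≥ 0` on `[-1,1]` and `η ≥ r·λ̃`,
the last integral is at least `r ∫ (1 - x²) dλ̃ = 2r/3`. -/

set_option autoImplicit false

open MeasureTheory Set ENNReal

lemma vMeas_one : vMeas (fun _ => (1 : ℝ)) = unif := by
  simp [vMeas]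

lemma MemXi.ae_mem {η : Measure ℝ} (h : MemXi η) : ∀ᵐ x ∂η, x ∈ Icc (-1 : ℝ) 1 := by
  obtain ⟨-, s, w, d, hs, -, -, rfl⟩ := h
  rw [ae_add_measure_iff]
  constructor
  · rw [ae_iff]
    simp only [Measure.coe_finsetSum, Finset.sum_apply, Finset.sum_eq_zero_iff]
    intro t ht
    have : t ∈ Icc (-1 : ℝ) 1 := hs ht
    have hm : MeasurableSet {a : ℝ | a ∉ Icc (-1 : ℝ) 1} := measurableSet_Icc.compl
    rw [Measure.smul_apply, Measure.dirac_apply' _ hm]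
    simp [this.1, this.2]
  · exact (withDensity_absolutelyContinuous _ _).ae_le (ae_restrict_mem measurableSet_Icc)

/-- Continuous functions are integrable for a finite measure carried by `[-1,1]`. -/
lemma integrable_of_ae_mem {η : Measure ℝ} [IsFiniteMeasure η]
    (h : ∀ᵐ x ∂η, x ∈ Icc (-1 : ℝ) 1) {g : ℝ → ℝ} (hg : Continuous g) : Integrable g η := by
  rw [← Measure.restrict_eq_self_of_ae_mem h]
  exact hg.continuousOn.integrableOn_compact isCompact_Icc

lemma integral_unif (g : ℝ → ℝ) : ∫ x, g x ∂unif = (1 / 2) * ∫ x in (-1 : ℝ)..1, g x := by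
  rw [unif, integral_smul_measure, integral_Icc_eq_integral_Ioc,
    intervalIntegral.integral_of_le (by norm_num)]
  simp

instance : IsProbabilityMeasure unif := by
  constructor
  rw [unif, Measure.smul_apply, Measure.restrict_apply_univ, Real.volume_Icc]
  norm_num
  exact ENNReal.inv_mul_cancel (by simp) (by simp)

lemma unif_ae_mem : ∀ᵐ x ∂unif, x ∈ Icc (-1 : ℝ) 1 :=
  Measure.ae_smul_measure (ae_restrict_mem measurableSet_Icc) _

/-- The design `r·λ̃ + (1-r)·(1/2)(δ_{-1} + δ_1)`. -/
noncomputable def lineDesign (r : ℝ) : Measure ℝ :=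
  ENNReal.ofReal r • unif
    + ENNReal.ofReal ((1 - r) * (1 / 2)) • (Measure.dirac (-1) + Measure.dirac 1)

lemma integral_lineDesign {r : ℝ} (hr : r ∈ Icc (0 : ℝ) 1) {g : ℝ → ℝ} (hg : Continuous g) :
    ∫ x, g x ∂lineDesign r
      = r * ((1 / 2) * ∫ x in (-1 : ℝ)..1, g x) + (1 - r) * (1 / 2) * (g (-1) + g 1) := by
  have hd (a : ℝ) : Integrable g (Measure.dirac a) := integrable_dirac (by simp)
  have h0 : 0 ≤ (1 - r) * (1 / 2) := by linarith [hr.2]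
  rw [lineDesign, integral_add_measure
      ((integrable_of_ae_mem unif_ae_mem hg).smul_measure ENNReal.ofReal_ne_top)
      (((hd _).add_measure (hd _)).smul_measure ENNReal.ofReal_ne_top),
    integral_smul_measure, integral_smul_measure, integral_add_measure (hd _) (hd _),
    integral_unif, integral_dirac, integral_dirac, ENNReal.toReal_ofReal hr.1,
    ENNReal.toReal_ofReal h0, smul_eq_mul, smul_eq_mul]

lemma memUps_lineDesign {r : ℝ} (hr : r ∈ Icc (0 : ℝ) 1) :
    MemUps (fun _ => (1 : ℝ)) r (lineDesign r) := by
  have h0 : 0 ≤ (1 - r) * (1 / 2) := by linarith [hr.2]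
  refine ⟨⟨⟨?_⟩, {-1, 1}, fun _ => ENNReal.ofReal ((1 - r) * (1 / 2)), fun _ => r / 2,
    ?_, ?_, fun _ => by linarith [hr.1], ?_⟩, ?_⟩
  · simp only [lineDesign, Measure.add_apply, Measure.smul_apply, measure_univ, smul_eq_mul,
      mul_one]
    rw [mul_add, mul_one, ← ENNReal.ofReal_add h0 h0, ← ENNReal.ofReal_add hr.1 (by linarith)]
    ring_nf
    simp
  · intro x hx
    simp only [Finset.coe_insert, Finset.coe_singleton, mem_insert_iff, mem_singleton_iff] at hx
    rcases hx with rfl | rfl <;> norm_num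
  · have h := (monotoneOn_const (s := Icc (-1 : ℝ) 1) (c := r / 2)).locallyBoundedVariationOn
      (-1) 1 (by simp) (by simp)
    rwa [inter_self] at h
  · rw [Finset.sum_pair (by norm_num), withDensity_const, ← smul_add, add_comm, lineDesign, unif,
      smul_smul, ENNReal.ofReal_div_of_pos two_pos, ENNReal.ofReal_ofNat]
    simp only [div_eq_mul_inv]
  · rw [vMeas_one, lineDesign]
    exact Measure.le_add_right le_rfl

/-- For a probability measure the last diagonal entry of the inverse `2 × 2` moment matrix is the
reciprocal of its determinant, the variance. -/
lemma designMatrix_two (η : Measure ℝ) [IsProbabilityMeasure η] :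
    (designMatrix 2 η).det = (∫ x, x ^ 2 ∂η) - (∫ x, x ∂η) ^ 2 ∧
    (designMatrix 2 η)⁻¹ (lastIdx 2 two_pos) (lastIdx 2 two_pos) =
      ((∫ x, x ^ 2 ∂η) - (∫ x, x ∂η) ^ 2)⁻¹ := by
  have hdet : (designMatrix 2 η).det = (∫ x, x ^ 2 ∂η) - (∫ x, x ∂η) ^ 2 := by
    rw [Matrix.det_fin_two]
    simp [designMatrix, pow_two]
  refine ⟨hdet, ?_⟩
  have hl : lastIdx 2 two_pos = 1 := rfl
  rw [hl, Matrix.inv_def, Matrix.adjugate_fin_two, hdet]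
  simp [designMatrix]

lemma variance_lineDesign {r : ℝ} (hr : r ∈ Icc (0 : ℝ) 1) :
    (∫ x, x ^ 2 ∂lineDesign r) - (∫ x, x ∂lineDesign r) ^ 2 = 1 - 2 * r / 3 := by
  rw [integral_lineDesign hr (by fun_prop), integral_lineDesign hr (by fun_prop)]
  simp only [integral_pow, integral_id]
  norm_num
  ring

/-- The second moment on `Υ[r]` is maximal when all the free mass sits at `±1`. -/
lemma integral_sq_le {r : ℝ} (hr : r ∈ Icc (0 : ℝ) 1) {η : Measure ℝ}
    (h : MemUps (fun _ => (1 : ℝ)) r η) : ∫ x, x ^ 2 ∂η ≤ 1 - 2 * r / 3 := by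
  obtain ⟨hxi, hle⟩ := h
  rw [vMeas_one] at hle
  have := hxi.1
  have hmem := hxi.ae_mem
  have h1 : ∫ x, (1 - x ^ 2) ∂(ENNReal.ofReal r • unif) ≤ ∫ x, (1 - x ^ 2) ∂η := by
    refine integral_mono_measure hle ?_ (integrable_of_ae_mem hmem (by fun_prop))
    filter_upwards [hmem] with x hx
    simp only [Pi.zero_apply]
    nlinarith [hx.1, hx.2]
  rw [integral_smul_measure, integral_unif, ENNReal.toReal_ofReal hr.1,
    integral_sub (integrable_const _) (integrable_of_ae_mem hmem (by fun_prop)),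
    intervalIntegral.integral_sub (by simp) (by simp)] at h1
  simp only [integral_pow, intervalIntegral.integral_const, integral_const, smul_eq_mul,
    probReal_univ] at h1
  norm_num at h1
  linarith

lemma variance_nonneg_of_ae_mem {η : Measure ℝ} [IsProbabilityMeasure η]
    (hmem : ∀ᵐ x ∂η, x ∈ Icc (-1 : ℝ) 1) : 0 ≤ (∫ x, x ^ 2 ∂η) - (∫ x, x ∂η) ^ 2 := by
  set m := ∫ x, x ∂η with hm
  have h : ∫ x, (x - m) ^ 2 ∂η = (∫ x, x ^ 2 ∂η) - m ^ 2 := by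
    have : ∀ x : ℝ, (x - m) ^ 2 = x ^ 2 - (2 * m * x - m ^ 2) := fun x => by ring
    simp_rw [this]
    rw [integral_sub (integrable_of_ae_mem hmem (by fun_prop))
        (integrable_of_ae_mem hmem (by fun_prop)),
      integral_sub (integrable_of_ae_mem hmem (by fun_prop)) (integrable_const _),
      integral_const_mul, ← hm]
    simp
    ring
  rw [← h]
  exact integral_nonneg fun x => sq_nonneg _

/-- **Example 3.4(a)**: for straight-line regression (`k = 2`) with constant weight `v ≡ 1`
and any `r ∈ [0,1]`, the design `ξ = r·λ̃ + (1-r)·(1/2)(δ_{-1} + δ_1)` is `e_2`-optimal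
in `Υ[r]`. -/
theorem ekOptimal_line (r : ℝ) (hr : r ∈ Icc (0 : ℝ) 1) :
    EkOptimal 2 two_pos (fun _ => (1 : ℝ)) r
      (ENNReal.ofReal r • unif
        + ENNReal.ofReal ((1 - r) * (1 / 2)) • (Measure.dirac (-1) + Measure.dirac 1)) := by
  change EkOptimal 2 two_pos (fun _ => (1 : ℝ)) r (lineDesign r)
  have hups := memUps_lineDesign hr
  have := hups.1.1
  have hvar := variance_lineDesign hr
  refine ⟨hups, ?_, fun η hη hdet => ?_⟩
  · rw [(designMatrix_two _).1, hvar]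
    linarith [hr.2]
  · have := hη.1.1
    rw [(designMatrix_two η).1] at hdet
    rw [(designMatrix_two _).2, (designMatrix_two η).2, hvar]
    have hpos := lt_of_le_of_ne (variance_nonneg_of_ae_mem hη.1.ae_mem) hdet.symm
    exact inv_anti₀ hpos (by linarith [integral_sq_le hr hη, sq_nonneg (∫ x, x ∂η)])
end

section
/- For quartic regression (k = 5) on [−1,1] with constant weight v ≡ 1 and any r ∈ [0, 105/136], the design ξ = r·λ̃ + (1/8 − r/14)(δ_{−1} + δ_1) + (1/4 − 4r/15)(δ_{−1/√2} + δ_{1/√2}) + (1/4 − 34r/105)·δ_0 is e_5-optimal in Υ[r], i.e., it minimizes e_5ᵀ M(·)⁻¹ e_5 over Υ[r]. (Example 3.4(d)) -/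
/-! The optimality rests on the Chebyshev polynomial `T₄(x) = 8x⁴ - 8x² + 1`, with coefficient
vector `chebCoeff = t`.

The weights of the design `ξ` are chosen so that `T₄` is orthogonal in `L²(ξ)` to `1, x, x², x³`;
equivalently `M(ξ) t = (B/8) e₅` where `B = ∫ T₄² dξ`, so that `e₅ᵀ M(ξ)⁻¹ e₅ = 64 / B`.

For a competitor `η`, put `w = M(η)⁻¹ e₅`. Expanding the nonnegative quadratic form of `M(η)` at
`t - (B/8) w` gives `∫ T₄² dη - 2B + (B²/64) e₅ᵀ M(η)⁻¹ e₅ ≥ 0`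
(`le_inv_of_integral_cheb_le`), so it suffices to know `∫ T₄² dη ≤ B`.

That last inequality holds because `1 - T₄²` is nonnegative on `[-1,1]` and vanishes at the five
atoms of `ξ`, while `η` dominates `r • λ̃`:
`∫ (1 - T₄²) dη ≥ r ∫ (1 - T₄²) dλ̃ = ∫ (1 - T₄²) dξ` (`integral_cheb_sq_le`). -/

set_option autoImplicit false

open MeasureTheory Set ENNReal

/-- `vᵀ M(η) v = ∫ (∑ vᵢ xⁱ)² dη`. -/
lemma quadForm_designMatrix {k : ℕ} {η : Measure ℝ} (h : ∀ n : ℕ, Integrable (fun x => x ^ n) η)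
    (v : Fin k → ℝ) :
    v ⬝ᵥ (designMatrix k η).mulVec v = ∫ x, (∑ i, v i * x ^ (i : ℕ)) ^ 2 ∂η := by
  have e : ∀ x : ℝ, (∑ i, v i * x ^ (i : ℕ)) ^ 2
      = ∑ i : Fin k, ∑ j : Fin k, v i * v j * x ^ ((i : ℕ) + (j : ℕ)) := by
    intro x
    rw [sq, Finset.sum_mul_sum]
    refine Finset.sum_congr rfl fun i _ => Finset.sum_congr rfl fun j _ => ?_
    ring
  simp_rw [e]
  rw [integral_finsetSum _ fun i _ => integrable_finsetSum _ fun j _ => (h _).const_mul _]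
  simp only [dotProduct, Matrix.mulVec, designMatrix, Matrix.of_apply, Finset.mul_sum]
  refine Finset.sum_congr rfl fun i _ => ?_
  rw [integral_finsetSum _ fun j _ => (h _).const_mul _]
  refine Finset.sum_congr rfl fun j _ => ?_
  rw [integral_const_mul]
  ring

lemma designMatrix_transpose (k : ℕ) (η : Measure ℝ) :
    (designMatrix k η).transpose = designMatrix k η := by
  ext i j
  simp [designMatrix, add_comm]

/-- Coefficients of the Chebyshev polynomial `T₄(x) = 8x⁴ - 8x² + 1`, constant term first. -/
def chebCoeff : Fin 5 → ℝ := ![1, 0, -8, 0, 8]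

lemma sum_chebCoeff (x : ℝ) :
    ∑ i, chebCoeff i * x ^ (i : ℕ) = 8 * x ^ 4 - 8 * x ^ 2 + 1 := by
  simp [chebCoeff, Fin.sum_univ_five]
  ring

/-- Lower bound for `e₅ᵀ M(η)⁻¹ e₅` obtained by testing the quadratic form of `M(η)` against
`t - (B/8) M(η)⁻¹ e₅`. -/
lemma le_inv_of_integral_cheb_le {η : Measure ℝ} {B : ℝ} (hB : 0 < B)
    (h : ∀ n : ℕ, Integrable (fun x => x ^ n) η) (hdet : (designMatrix 5 η).det ≠ 0)
    (hle : ∫ x, (8 * x ^ 4 - 8 * x ^ 2 + 1) ^ 2 ∂η ≤ B) :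
    64 / B ≤ (designMatrix 5 η)⁻¹ 4 4 := by
  set M := designMatrix 5 η with hM
  set w : Fin 5 → ℝ := M⁻¹.mulVec (Pi.single 4 1) with hw
  have hMw : M.mulVec w = Pi.single 4 1 := by
    rw [hw, Matrix.mulVec_mulVec, Matrix.mul_nonsing_inv _ (isUnit_iff_ne_zero.mpr hdet),
      Matrix.one_mulVec]
  have hw4 : w 4 = M⁻¹ 4 4 := by simp [hw]
  have hpos : 0 ≤ (chebCoeff - (B / 8) • w) ⬝ᵥ M.mulVec (chebCoeff - (B / 8) • w) := by
    rw [hM, quadForm_designMatrix h]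
    exact integral_nonneg fun x => sq_nonneg _
  have hsymm : w ⬝ᵥ M.mulVec chebCoeff = 8 := by
    rw [Matrix.dotProduct_mulVec, ← Matrix.mulVec_transpose, hM, designMatrix_transpose, ← hM, hMw]
    simp [chebCoeff]
  have hq : chebCoeff ⬝ᵥ M.mulVec chebCoeff ≤ B := by
    rw [hM, quadForm_designMatrix h]
    simpa only [sum_chebCoeff] using hle
  have hc : chebCoeff ⬝ᵥ (Pi.single 4 1 : Fin 5 → ℝ) = 8 := by simp [chebCoeff]
  have hww : w ⬝ᵥ (Pi.single 4 1 : Fin 5 → ℝ) = M⁻¹ 4 4 := by simp [hw4]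
  rw [Matrix.mulVec_sub, Matrix.mulVec_smul, hMw, sub_dotProduct, dotProduct_sub, dotProduct_sub,
    smul_dotProduct, smul_dotProduct, dotProduct_smul, dotProduct_smul, hsymm, hc, hww] at hpos
  simp only [smul_eq_mul] at hpos
  rw [div_le_iff₀ hB]
  by_contra! hlt
  nlinarith [mul_lt_mul_of_pos_right hlt hB]

lemma integral_unif_cheb_sq : ∫ x, (8 * x ^ 4 - 8 * x ^ 2 + 1) ^ 2 ∂unif = 31 / 63 := by
  rw [integral_unif]
  have : ∀ x : ℝ, (8 * x ^ 4 - 8 * x ^ 2 + 1) ^ 2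
      = 64 * x ^ 8 - 128 * x ^ 6 + 80 * x ^ 4 - 16 * x ^ 2 + 1 := fun x => by ring
  simp_rw [this]
  rw [intervalIntegral.integral_add, intervalIntegral.integral_sub, intervalIntegral.integral_add,
    intervalIntegral.integral_sub]
  · simp only [intervalIntegral.integral_const_mul, integral_pow, intervalIntegral.integral_const]
    norm_num
  all_goals exact Continuous.intervalIntegrable (by fun_prop) _ _

/-- Over `Υ[r]`, the integral of `T₄²` is at most `r ∫ T₄² dλ̃ + (1 - r)`. -/
lemma integral_cheb_sq_le {r : ℝ} (hr : 0 ≤ r) {η : Measure ℝ}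
    (h : MemUps (fun _ => (1 : ℝ)) r η) :
    ∫ x, (8 * x ^ 4 - 8 * x ^ 2 + 1) ^ 2 ∂η ≤ 1 - 32 / 63 * r := by
  obtain ⟨hXi, hle⟩ := h
  rw [vMeas_one] at hle
  have hae := hXi.ae_mem
  have := hXi.1
  have hTint : Integrable (fun x : ℝ => (8 * x ^ 4 - 8 * x ^ 2 + 1) ^ 2) η :=
    integrable_of_ae_mem hae (by fun_prop)
  have hnn : 0 ≤ᵐ[η] fun x : ℝ => 1 - (8 * x ^ 4 - 8 * x ^ 2 + 1) ^ 2 := by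
    filter_upwards [hae] with x hx
    have hx2 : x ^ 2 ≤ 1 := by nlinarith [hx.1, hx.2]
    -- `1 - T₄² = 16 x² (1 - x²) (2x² - 1)²`
    have : 1 - (8 * x ^ 4 - 8 * x ^ 2 + 1) ^ 2
        = 16 * x ^ 2 * (1 - x ^ 2) * (2 * x ^ 2 - 1) ^ 2 := by ring
    rw [Pi.zero_apply, this]
    have : 0 ≤ 1 - x ^ 2 := by linarith
    positivity
  have key := integral_mono_measure hle hnn ((integrable_const 1).sub hTint)
  rw [integral_smul_measure, integral_sub (integrable_const 1) hTint,
    integral_sub (integrable_const 1) (integrable_of_ae_mem unif_ae_mem (by fun_prop)),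
    integral_unif_cheb_sq, ENNReal.toReal_ofReal hr] at key
  simp only [integral_const, probReal_univ, smul_eq_mul] at key
  linarith

/-! ### The optimal design -/

/-- The design of the theorem, abbreviated. -/
noncomputable def quarticDesign (r : ℝ) : Measure ℝ :=
  ENNReal.ofReal r • unif
    + ENNReal.ofReal (1 / 8 - r / 14) • (Measure.dirac (-1) + Measure.dirac 1)
    + ENNReal.ofReal (1 / 4 - 4 * r / 15) •
        (Measure.dirac (-(1 / Real.sqrt 2)) + Measure.dirac (1 / Real.sqrt 2))
    + ENNReal.ofReal (1 / 4 - 34 * r / 105) • Measure.dirac 0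

lemma integral_quarticDesign {r : ℝ} (hr : r ∈ Icc (0 : ℝ) (105 / 136)) {g : ℝ → ℝ}
    (hg : Continuous g) :
    ∫ x, g x ∂quarticDesign r = r * ((1 / 2) * ∫ x in (-1 : ℝ)..1, g x)
      + (1 / 8 - r / 14) * (g (-1) + g 1)
      + (1 / 4 - 4 * r / 15) * (g (-(1 / Real.sqrt 2)) + g (1 / Real.sqrt 2))
      + (1 / 4 - 34 * r / 105) * g 0 := by
  obtain ⟨h0, h1⟩ := hr
  have iu : Integrable g unif := integrable_of_ae_mem unif_ae_mem hg
  have id : ∀ a : ℝ, Integrable g (Measure.dirac a) := fun a => integrable_dirac (by simp)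
  have i1 := iu.smul_measure (c := ENNReal.ofReal r) (by simp)
  have i2 := ((id (-1)).add_measure (id 1)).smul_measure
    (c := ENNReal.ofReal (1 / 8 - r / 14)) (by simp)
  have i3 := ((id (-(1 / Real.sqrt 2))).add_measure (id (1 / Real.sqrt 2))).smul_measure
    (c := ENNReal.ofReal (1 / 4 - 4 * r / 15)) (by simp)
  have i4 := (id 0).smul_measure (c := ENNReal.ofReal (1 / 4 - 34 * r / 105)) (by simp)
  rw [quarticDesign, integral_add_measure ((i1.add_measure i2).add_measure i3) i4,
    integral_add_measure (i1.add_measure i2) i3, integral_add_measure i1 i2]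
  simp only [integral_smul_measure]
  rw [integral_add_measure (id _) (id _), integral_add_measure (id _) (id _), integral_unif,
    ENNReal.toReal_ofReal h0, ENNReal.toReal_ofReal (by linarith),
    ENNReal.toReal_ofReal (by linarith), ENNReal.toReal_ofReal (by linarith)]
  simp only [integral_dirac, smul_eq_mul]

lemma memUps_quarticDesign {r : ℝ} (hr : r ∈ Icc (0 : ℝ) (105 / 136)) :
    MemUps (fun _ => (1 : ℝ)) r (quarticDesign r) := by
  obtain ⟨h0, h1⟩ := hr
  have hs0 : 0 < 1 / Real.sqrt 2 := by positivity
  have hs1 : 1 / Real.sqrt 2 < 1 := by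
    rw [div_lt_one (by positivity)]
    exact Real.lt_sqrt_of_sq_lt (by norm_num)
  refine ⟨⟨⟨?_⟩, ?_⟩, ?_⟩
  · simp only [quarticDesign, Measure.add_apply, Measure.smul_apply, measure_univ, smul_eq_mul,
      mul_one]
    rw [one_add_one_eq_two, ← ENNReal.ofReal_ofNat 2, ← ENNReal.ofReal_mul (by linarith),
      ← ENNReal.ofReal_mul (by linarith), ← ENNReal.ofReal_add (by linarith) (by linarith),
      ← ENNReal.ofReal_add (by linarith) (by linarith),
      ← ENNReal.ofReal_add (by linarith) (by linarith), ← ENNReal.ofReal_one]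
    congr 1
    ring
  · unfold quarticDesign
    generalize 1 / Real.sqrt 2 = s at hs0 hs1
    refine ⟨{-1, 1, -s, s, 0}, fun t => if t = -1 ∨ t = 1 then ENNReal.ofReal (1 / 8 - r / 14)
      else if t = 0 then ENNReal.ofReal (1 / 4 - 34 * r / 105)
      else ENNReal.ofReal (1 / 4 - 4 * r / 15), fun _ => r / 2, ?_, ?_, ?_, ?_⟩
    · intro t ht
      simp only [Finset.coe_insert, Finset.coe_singleton, mem_insert_iff, mem_singleton_iff] at ht
      rcases ht with rfl | rfl | rfl | rfl | rfl <;> constructor <;> linarith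
    · have : eVariationOn (fun _ : ℝ => r / 2) (Icc (-1) 1) = 0 :=
        eVariationOn.constant_on (by
          rintro _ ⟨_, _, rfl⟩ _ ⟨_, _, rfl⟩
          rfl)
      simp [BoundedVariationOn, this]
    · intro _
      positivity
    · have a1 : (-1 : ℝ) ∉ ({1, -s, s, 0} : Finset ℝ) := by
        simp only [Finset.mem_insert, Finset.mem_singleton]
        rintro (h | h | h | h) <;> linarith
      have a2 : (1 : ℝ) ∉ ({-s, s, 0} : Finset ℝ) := by
        simp only [Finset.mem_insert, Finset.mem_singleton]
        rintro (h | h | h) <;> linarith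
      have a3 : -s ∉ ({s, 0} : Finset ℝ) := by
        simp only [Finset.mem_insert, Finset.mem_singleton]
        rintro (h | h) <;> linarith
      have a4 : s ∉ ({0} : Finset ℝ) := by
        simpa using hs0.ne'
      rw [Finset.sum_insert a1, Finset.sum_insert a2, Finset.sum_insert a3, Finset.sum_insert a4,
        Finset.sum_singleton]
      have e1 : ¬ (-s = -1 ∨ -s = 1) := by rintro (h | h) <;> linarith
      have e2 : ¬ (s = -1 ∨ s = 1) := by rintro (h | h) <;> linarith
      have e3 : ¬ ((0 : ℝ) = -1 ∨ (0 : ℝ) = 1) := by norm_num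
      have e4 : ¬ (-s = 0) := by linarith
      have e5 : ¬ (s = 0) := hs0.ne'
      beta_reduce
      rw [if_pos (Or.inl rfl), if_pos (Or.inr rfl), if_neg e1, if_neg e2, if_neg e3, if_neg e4,
        if_neg e5, if_pos rfl, withDensity_const, unif, smul_smul,
        ENNReal.ofReal_div_of_pos two_pos,
        ENNReal.ofReal_ofNat, ← div_eq_mul_inv, smul_add, smul_add]
      abel
  · rw [vMeas_one, quarticDesign, add_assoc, add_assoc]
    exact Measure.le_add_right le_rfl

lemma designMatrix_quarticDesign {r : ℝ} (hr : r ∈ Icc (0 : ℝ) (105 / 136)) :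
    designMatrix 5 (quarticDesign r) =
      !![1, 0, 1 / 2 - 8 * r / 105, 0, 3 / 8 - 8 * r / 105;
         0, 1 / 2 - 8 * r / 105, 0, 3 / 8 - 8 * r / 105, 0;
         1 / 2 - 8 * r / 105, 0, 3 / 8 - 8 * r / 105, 0, 5 / 16 - r / 15;
         0, 3 / 8 - 8 * r / 105, 0, 5 / 16 - r / 15, 0;
         3 / 8 - 8 * r / 105, 0, 5 / 16 - r / 15, 0, 9 / 32 - 41 * r / 630] := by
  have hs2 : (Real.sqrt 2)⁻¹ ^ 2 = 1 / 2 := by rw [inv_pow, Real.sq_sqrt (by norm_num)]; norm_num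
  have hs4 : (Real.sqrt 2)⁻¹ ^ 4 = 1 / 4 := by
    rw [show (Real.sqrt 2)⁻¹ ^ 4 = ((Real.sqrt 2)⁻¹ ^ 2) ^ 2 by ring, hs2]; norm_num
  have hs6 : (Real.sqrt 2)⁻¹ ^ 6 = 1 / 8 := by
    rw [show (Real.sqrt 2)⁻¹ ^ 6 = ((Real.sqrt 2)⁻¹ ^ 2) ^ 3 by ring, hs2]; norm_num
  have hs8 : (Real.sqrt 2)⁻¹ ^ 8 = 1 / 16 := by
    rw [show (Real.sqrt 2)⁻¹ ^ 8 = ((Real.sqrt 2)⁻¹ ^ 2) ^ 4 by ring, hs2]; norm_num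
  ext i j
  simp only [designMatrix, Matrix.of_apply]
  rw [integral_quarticDesign hr (by fun_prop), integral_pow, one_div (Real.sqrt 2)]
  fin_cases i <;> fin_cases j <;>
    · norm_num [neg_pow (Real.sqrt 2)⁻¹, hs2, hs4, hs6, hs8, -inv_pow]
      try ring

/-- The moment matrix is a direct sum of a `3 × 3` and a `2 × 2` block, by parity; the first two
factors are the determinant of the even block, the last one that of the odd
block. -/
lemma det_designMatrix_quarticDesign {r : ℝ} (hr : r ∈ Icc (0 : ℝ) (105 / 136)) :
    (designMatrix 5 (quarticDesign r)).det ≠ 0 := by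
  have hd : (designMatrix 5 (quarticDesign r)).det
      = (1 - 32 / 63 * r) / 64 * (3 / 8 - 8 * r / 105 - (1 / 2 - 8 * r / 105) ^ 2)
        * ((1 / 2 - 8 * r / 105) * (5 / 16 - r / 15) - (3 / 8 - 8 * r / 105) ^ 2) := by
    rw [designMatrix_quarticDesign hr]
    simp [Matrix.det_succ_row_zero, Fin.sum_univ_succ, Fin.succAbove]
    ring
  obtain ⟨h0, h1⟩ := hr
  rw [hd]
  have f1 : 0 < 1 - 32 / 63 * r := by linarith
  have f2 : 0 < 3 / 8 - 8 * r / 105 - (1 / 2 - 8 * r / 105) ^ 2 := by nlinarith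
  have f3 : 0 < (1 / 2 - 8 * r / 105) * (5 / 16 - r / 15) - (3 / 8 - 8 * r / 105) ^ 2 := by
    nlinarith
  positivity

lemma inv_designMatrix_quarticDesign {r : ℝ} (hr : r ∈ Icc (0 : ℝ) (105 / 136)) :
    (designMatrix 5 (quarticDesign r))⁻¹ 4 4 = 64 / (1 - 32 / 63 * r) := by
  have hdet := det_designMatrix_quarticDesign hr
  have hB : 1 - 32 / 63 * r ≠ 0 := by linarith [hr.2]
  -- orthogonality of `T₄` to the lower powers
  have hMt : (designMatrix 5 (quarticDesign r)).mulVec chebCoeff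
      = ((1 - 32 / 63 * r) / 8) • Pi.single 4 1 := by
    rw [designMatrix_quarticDesign hr]
    ext i
    fin_cases i <;> simp [chebCoeff, Matrix.mulVec, dotProduct, Fin.sum_univ_five] <;> ring
  have h := congrArg (fun u => (designMatrix 5 (quarticDesign r))⁻¹.mulVec u 4) hMt
  simp only [Matrix.mulVec_mulVec, Matrix.nonsing_inv_mul _ (isUnit_iff_ne_zero.mpr hdet),
    Matrix.one_mulVec, Matrix.mulVec_smul, Pi.smul_apply, Matrix.mulVec_single_one, Matrix.col_apply,
    smul_eq_mul] at h
  have h8 : chebCoeff 4 = 8 := by simp [chebCoeff]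
  rw [h8] at h
  rw [eq_div_iff hB]
  linarith

/-- **Example 3.4(d)**: for quartic regression (`k = 5`) with constant weight `v ≡ 1`
and any `r ∈ [0, 105/136]`, the design
`ξ = r·λ̃ + (1/8 - r/14)(δ_{-1} + δ_1) + (1/4 - 4r/15)(δ_{-1/√2} + δ_{1/√2})
+ (1/4 - 34r/105)δ_0` is `e_5`-optimal in `Υ[r]`. -/
theorem ekOptimal_quartic (r : ℝ) (hr : r ∈ Icc (0 : ℝ) (105 / 136)) :
    EkOptimal 5 (by norm_num) (fun _ => (1 : ℝ)) r
      (ENNReal.ofReal r • unif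
        + ENNReal.ofReal (1 / 8 - r / 14) • (Measure.dirac (-1) + Measure.dirac 1)
        + ENNReal.ofReal (1 / 4 - 4 * r / 15) •
            (Measure.dirac (-(1 / Real.sqrt 2)) + Measure.dirac (1 / Real.sqrt 2))
        + ENNReal.ofReal (1 / 4 - 34 * r / 105) • Measure.dirac 0) := by
  obtain ⟨h0, h1⟩ := hr
  refine ⟨memUps_quarticDesign ⟨h0, h1⟩, det_designMatrix_quarticDesign ⟨h0, h1⟩, ?_⟩
  intro η hη hdet
  have := hη.1.1
  have hl : lastIdx 5 (by norm_num) = 4 := rfl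
  rw [hl]
  refine (inv_designMatrix_quarticDesign ⟨h0, h1⟩).trans_le ?_
  exact le_inv_of_integral_cheb_le (by linarith)
    (fun n => integrable_of_ae_mem hη.1.ae_mem (by fun_prop)) hdet (integral_cheb_sq_le h0 hη)
end
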